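/- Fix a real α ≥ 1. For φ ∈ (0, π) define u(φ) := [2·sin((π−φ)/(1+α))/(1+α)] · Θ_{1/α}(φ)^{2α+1} · (d(φ)² − 1), w(φ) := [2·sin φ/(1+α)²] · Θ_{1/α}(φ)^{4α+1} · [ (d(φ)² − 1)·cos((π−φ)/(1+1/α)) − 2·d(φ)·sin((π−φ)/(1+1/α)) ], and s(φ) := Θ_{1/α}(φ)^α · Θ_α(φ). Then for every φ ∈ (0, π), either u(φ) = 0 and w(φ) ≠ 0, or u(φ) ≠ 0 and w(φ)/(u(φ)·s(φ)) ∉ (0, 1). -/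

import Mathlib

open Real Set

/-- `Th α t = sin t / ((1+α)·sin((π−t)/(1+α)))`; `Th (1/α)` is `Θ_{1/α}`. -/
noncomputable def Th (α t : ℝ) : ℝ :=
  Real.sin t / ((1 + α) * Real.sin ((Real.pi - t) / (1 + α)))

/-- `dfun α φ = (1+α)·cot φ + α·cot((π−φ)/(1+1/α))`. -/
noncomputable def dfun (α φ : ℝ) : ℝ :=
  (1 + α) * Real.cot φ + α * Real.cot ((Real.pi - φ) / (1 + 1/α))

/-- `ufun α φ = [2·sin((π−φ)/(1+α))/(1+α)] · Θ_{1/α}(φ)^{2α+1} · (d(φ)² − 1)`. -/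
noncomputable def ufun (α φ : ℝ) : ℝ :=
  (2 * Real.sin ((Real.pi - φ) / (1 + α)) / (1 + α)) * (Th (1/α) φ) ^ (2*α + 1) *
    ((dfun α φ)^2 - 1)

/-- `wfun α φ = [2·sin φ/(1+α)²] · Θ_{1/α}(φ)^{4α+1} ·
    [(d(φ)² − 1)·cos((π−φ)/(1+1/α)) − 2·d(φ)·sin((π−φ)/(1+1/α))]`. -/
noncomputable def wfun (α φ : ℝ) : ℝ :=
  (2 * Real.sin φ / (1 + α)^2) * (Th (1/α) φ) ^ (4*α + 1) *
    (((dfun α φ)^2 - 1) * Real.cos ((Real.pi - φ) / (1 + 1/α)) -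
      2 * dfun α φ * Real.sin ((Real.pi - φ) / (1 + 1/α)))

/-- `sfun α φ = Θ_{1/α}(φ)^α · Θ_α(φ)`. -/
noncomputable def sfun (α φ : ℝ) : ℝ := (Th (1/α) φ) ^ α * Th α φ

/-!
Put `x = π - φ` and `a = α / (1 + α) ∈ [1/2, 1)`. Then `Θ_{1/α}(φ)` becomes
`T = a sin x / sin (a x)`, `d(φ)` becomes `d = (a cot (a x) - cot x) / (1 - a)`, and
`w / (u s)` becomes `R = T ^ α (cos (a x) + 2 d sin (a x) / (1 - d²))`.

Everything rests on `d ≥ 0` and `d cot (a x) ≤ 1`; the latter unfolds to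
`(2a - 1) sin x ≤ sin ((2a - 1) x)`. Since `T' = -(1 - a) d T` and `d` solves a Riccati equation,
these bounds make `d` increasing on `(0, π)`, and `R` increasing as long as `d < 1`. As `R` tends to
`1` at `0`, this gives `R ≥ 1` where `d < 1`. Where `d > 1` the bound `d cot (a x) ≤ 1` gives
`R ≤ 0` directly, and where `d = 1` we have `u = 0 ≠ w`.
-/

open Filter Topology

lemma mul_sin_le_mul_sin {p q : ℝ} (hp : 0 ≤ p) (hpπ : p ≤ π) (hpq : p ≤ q) (hq : q ≤ 2 * π) :
    p * sin q ≤ q * sin p := by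
  rcases le_total q π with hqπ | hqπ
  · rcases hp.eq_or_lt with rfl | hp
    · simp
    have hq0 : 0 < q := hp.trans_le hpq
    have hconc := strictConcaveOn_sin_Icc.concaveOn.2 ⟨le_rfl, pi_pos.le⟩ ⟨hq0.le, hqπ⟩
      (sub_nonneg.2 ((div_le_one hq0).2 hpq)) (div_pos hp hq0).le (sub_add_cancel 1 (p / q))
    have hchord : p / q * sin q ≤ sin p := by
      simpa [div_mul_cancel₀ p hq0.ne'] using hconc
    rwa [div_mul_eq_mul_div, div_le_iff₀' hq0] at hchord
  · have hsinq : sin q ≤ 0 := by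
      rw [← sin_sub_two_pi]
      exact sin_nonpos_of_nonpos_of_neg_pi_le (by linarith) (by linarith)
    exact (mul_nonpos_of_nonneg_of_nonpos hp hsinq).trans
      (mul_nonneg (hp.trans hpq) (sin_nonneg_of_nonneg_of_le_pi hp hpπ))

lemma hasDerivAt_cot {x : ℝ} (hx : sin x ≠ 0) : HasDerivAt cot (-(1 + cot x ^ 2)) x := by
  have hcot : cot = fun y => cos y / sin y := funext cot_eq_cos_div_sin
  rw [hcot]
  refine ((hasDerivAt_cos x).div (hasDerivAt_sin x) hx).congr_deriv ?_
  field_simp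
  ring

/-- `Θ_{1/α}(φ)` in the variables `a = α / (1 + α)` and `x = π - φ`. -/
noncomputable def sineRatio (a x : ℝ) : ℝ := a * sin x / sin (a * x)

/-- `d(φ)` in the variables `a = α / (1 + α)` and `x = π - φ`. -/
noncomputable def cotDiff (a x : ℝ) : ℝ := (a * cot (a * x) - cot x) / (1 - a)

/-- `w(φ) / (u(φ) s(φ))` in the variables `a = α / (1 + α)` and `x = π - φ`, so that
`α = a / (1 - a)`. The quotient by `0` where `cotDiff a x ^ 2 = 1` corresponds to `u(φ) = 0`. -/
noncomputable def criticalRatio (a x : ℝ) : ℝ :=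
  sineRatio a x ^ (a / (1 - a)) *
    (cos (a * x) + sin (a * x) * (2 * cotDiff a x / (1 - cotDiff a x ^ 2)))

section Derivatives

variable {a x : ℝ}

lemma hasDerivAt_sineRatio (ha : a ≠ 1) (hx : sin x ≠ 0) (hax : sin (a * x) ≠ 0) :
    HasDerivAt (sineRatio a) (-(1 - a) * cotDiff a x * sineRatio a x) x := by
  have hsin : HasDerivAt (fun y => sin (a * y)) (cos (a * x) * a) x :=
    (hasDerivAt_const_mul a).sin
  refine (((hasDerivAt_sin x).const_mul a).div hsin hax).congr_deriv ?_
  simp only [sineRatio, cotDiff, cot_eq_cos_div_sin]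
  field_simp
  ring

lemma hasDerivAt_sineRatio_rpow (ha : a ≠ 1) (hx : sin x ≠ 0) (hax : sin (a * x) ≠ 0)
    (hT : sineRatio a x ≠ 0) :
    HasDerivAt (fun y => sineRatio a y ^ (a / (1 - a)))
      (-a * cotDiff a x * sineRatio a x ^ (a / (1 - a))) x := by
  refine ((hasDerivAt_sineRatio ha hx hax).rpow_const (Or.inl hT)).congr_deriv ?_
  rw [rpow_sub_one hT]
  field_simp

lemma hasDerivAt_cotDiff (ha : a ≠ 1) (hx : sin x ≠ 0) (hax : sin (a * x) ≠ 0) :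
    HasDerivAt (cotDiff a)
      ((1 - a) * (1 + cotDiff a x ^ 2) + 2 * a * (1 - cotDiff a x * cot (a * x))) x := by
  have hcot : HasDerivAt (fun y => cot (a * y)) (-(1 + cot (a * x) ^ 2) * a) x :=
    (hasDerivAt_cot hax).comp x (hasDerivAt_const_mul a)
  refine (((hcot.const_mul a).sub (hasDerivAt_cot hx)).div_const (1 - a)).congr_deriv ?_
  simp only [cotDiff]
  field_simp
  ring

lemma hasDerivAt_criticalRatio (ha : a ≠ 1) (hx : sin x ≠ 0) (hax : sin (a * x) ≠ 0)
    (hT : sineRatio a x ≠ 0) (hd : 1 - cotDiff a x ^ 2 ≠ 0) :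
    HasDerivAt (criticalRatio a)
      (sineRatio a x ^ (a / (1 - a)) * sin (a * x) * (1 + cotDiff a x ^ 2) /
          (1 - cotDiff a x ^ 2) ^ 2 *
        (2 * (1 - a) * (1 + cotDiff a x ^ 2) +
          a * (1 - cotDiff a x * cot (a * x)) * (3 + cotDiff a x ^ 2))) x := by
  have hax' : HasDerivAt (fun y => a * y) a x := hasDerivAt_const_mul a
  have hd' := hasDerivAt_cotDiff ha hx hax
  have hfrac := (hd'.const_mul 2).div ((hd'.pow 2).const_sub 1) hd
  refine ((hasDerivAt_sineRatio_rpow ha hx hax hT).mul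
    (hax'.cos.add (hax'.sin.mul hfrac))).congr_deriv ?_
  have hcos : cos (a * x) = cot (a * x) * sin (a * x) := by
    rw [cot_eq_cos_div_sin, div_mul_cancel₀ _ hax]
  simp only [Pi.add_apply, Pi.mul_apply, Pi.div_apply, Pi.pow_apply, hcos]
  field_simp
  ring

end Derivatives

section Bounds

variable {a x : ℝ}

lemma sin_mul_pos (ha : 0 < a) (ha1 : a ≤ 1) (hx : x ∈ Ioo 0 π) : 0 < sin (a * x) :=
  sin_pos_of_pos_of_lt_pi (mul_pos ha hx.1)
    ((mul_le_of_le_one_left hx.1.le ha1).trans_lt hx.2)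

lemma sineRatio_pos (ha : 0 < a) (ha1 : a ≤ 1) (hx : x ∈ Ioo 0 π) : 0 < sineRatio a x :=
  div_pos (mul_pos ha (sin_pos_of_mem_Ioo hx)) (sin_mul_pos ha ha1 hx)

lemma tendsto_sineRatio (ha : a ≠ 0) : Tendsto (sineRatio a) (𝓝[>] 0) (𝓝 1) := by
  have hlim : Tendsto (fun y => sinc y / sinc (a * y)) (𝓝 0) (𝓝 1) := by
    have hcont : ContinuousAt (fun y => sinc y / sinc (a * y)) 0 :=
      continuous_sinc.continuousAt.div (by fun_prop) (by simp)
    simpa [ContinuousAt] using hcont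
  refine (hlim.mono_left nhdsWithin_le_nhds).congr' ?_
  filter_upwards [self_mem_nhdsWithin] with y hy
  have hy0 : y ≠ 0 := ne_of_gt hy
  rw [sinc_of_ne_zero hy0, sinc_of_ne_zero (mul_ne_zero ha hy0), sineRatio]
  field_simp

lemma cotDiff_eq (ha : a ≠ 1) (hx : sin x ≠ 0) (hax : sin (a * x) ≠ 0) :
    cotDiff a x = ((1 + a) * sin ((1 - a) * x) - (1 - a) * sin ((1 + a) * x)) /
      (2 * (1 - a) * (sin x * sin (a * x))) := by
  rw [show (1 - a) * x = x - a * x by ring, show (1 + a) * x = x + a * x by ring, sin_sub, sin_add,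
    cotDiff, cot_eq_cos_div_sin, cot_eq_cos_div_sin]
  field_simp
  ring

lemma cotDiff_nonneg (ha : 0 < a) (ha1 : a < 1) (hx : x ∈ Ioo 0 π) : 0 ≤ cotDiff a x := by
  have hsin : 0 < sin x := sin_pos_of_mem_Ioo hx
  have hsin' : 0 < sin (a * x) := sin_mul_pos ha ha1.le hx
  obtain ⟨hx0, hxπ⟩ := hx
  have hle : (1 - a) * x * sin ((1 + a) * x) ≤ (1 + a) * x * sin ((1 - a) * x) :=
    mul_sin_le_mul_sin (by positivity) (by nlinarith) (by nlinarith) (by nlinarith)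
  rw [cotDiff_eq ha1.ne hsin.ne' hsin'.ne']
  refine div_nonneg (sub_nonneg.2 (le_of_mul_le_mul_left ?_ hx0)) (by positivity)
  linarith

lemma one_sub_cotDiff_mul_cot (ha : a ≠ 1) (hx : sin x ≠ 0) (hax : sin (a * x) ≠ 0) :
    1 - cotDiff a x * cot (a * x) = (sin ((2 * a - 1) * x) - (2 * a - 1) * sin x) /
      (2 * (1 - a) * (sin x * sin (a * x) ^ 2)) := by
  rw [show (2 * a - 1) * x = 2 * (a * x) - x by ring, sin_sub, sin_two_mul, cos_two_mul,
    cotDiff, cot_eq_cos_div_sin, cot_eq_cos_div_sin]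
  field_simp
  linear_combination (2 - 2 * a) * sin x * sin_sq_add_cos_sq (a * x)

lemma cotDiff_mul_cot_le_one (ha : 1 / 2 ≤ a) (ha1 : a < 1) (hx : x ∈ Ioo 0 π) :
    cotDiff a x * cot (a * x) ≤ 1 := by
  have hsin : 0 < sin x := sin_pos_of_mem_Ioo hx
  have hsin' : 0 < sin (a * x) := sin_mul_pos (by linarith) ha1.le hx
  obtain ⟨hx0, hxπ⟩ := hx
  have hle : (2 * a - 1) * x * sin x ≤ x * sin ((2 * a - 1) * x) :=
    mul_sin_le_mul_sin (mul_nonneg (by linarith) hx0.le) (by nlinarith) (by nlinarith) (by linarith)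
  rw [← sub_nonneg, one_sub_cotDiff_mul_cot ha1.ne hsin.ne' hsin'.ne']
  refine div_nonneg (sub_nonneg.2 (le_of_mul_le_mul_left ?_ hx0)) (by positivity)
  linarith

end Bounds

section Monotonicity

variable {a x : ℝ}

lemma monotoneOn_cotDiff (ha : 1 / 2 ≤ a) (ha1 : a < 1) : MonotoneOn (cotDiff a) (Ioo 0 π) := by
  have hderiv (y : ℝ) (hy : y ∈ Ioo 0 π) := hasDerivAt_cotDiff ha1.ne
    (sin_pos_of_mem_Ioo hy).ne' (sin_mul_pos (by linarith) ha1.le hy).ne'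
  refine monotoneOn_of_hasDerivWithinAt_nonneg (convex_Ioo 0 π)
    (fun y hy => (hderiv y hy).continuousAt.continuousWithinAt)
    (fun y hy => (hderiv y (interior_subset hy)).hasDerivWithinAt) fun y hy => ?_
  have hcot := sub_nonneg.2 (cotDiff_mul_cot_le_one ha ha1 (interior_subset hy))
  positivity

lemma monotoneOn_criticalRatio (ha : 1 / 2 ≤ a) (ha1 : a < 1) (hx : x ∈ Ioo 0 π)
    (hd : cotDiff a x < 1) : MonotoneOn (criticalRatio a) (Ioc 0 x) := by
  have ha0 : 0 < a := by linarith
  have hmem (y : ℝ) (hy : y ∈ Ioc 0 x) : y ∈ Ioo 0 π := ⟨hy.1, hy.2.trans_lt hx.2⟩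
  have hdlt (y : ℝ) (hy : y ∈ Ioc 0 x) : 0 < 1 - cotDiff a y ^ 2 := by
    have hle := monotoneOn_cotDiff ha ha1 (hmem y hy) hx hy.2
    have h0 := cotDiff_nonneg ha0 ha1 (hmem y hy)
    exact sub_pos.2 (pow_lt_one₀ h0 (hle.trans_lt hd) two_ne_zero)
  have hderiv (y : ℝ) (hy : y ∈ Ioc 0 x) := hasDerivAt_criticalRatio ha1.ne
    (sin_pos_of_mem_Ioo (hmem y hy)).ne' (sin_mul_pos ha0 ha1.le (hmem y hy)).ne'
    (sineRatio_pos ha0 ha1.le (hmem y hy)).ne' (hdlt y hy).ne'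
  refine monotoneOn_of_hasDerivWithinAt_nonneg (convex_Ioc 0 x)
    (fun y hy => (hderiv y hy).continuousAt.continuousWithinAt)
    (fun y hy => (hderiv y (interior_subset hy)).hasDerivWithinAt) fun y hy => ?_
  have hyπ := hmem y (interior_subset hy)
  have hcot := sub_nonneg.2 (cotDiff_mul_cot_le_one ha ha1 hyπ)
  have hT := sineRatio_pos ha0 ha1.le hyπ
  have hsin := sin_mul_pos ha0 ha1.le hyπ
  positivity

lemma rpow_mul_cos_le_criticalRatio (ha : 0 < a) (ha1 : a < 1) (hx : x ∈ Ioo 0 π)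
    (hd : cotDiff a x < 1) :
    sineRatio a x ^ (a / (1 - a)) * cos (a * x) ≤ criticalRatio a x := by
  have hT := sineRatio_pos ha ha1.le hx
  have hsin := sin_mul_pos ha ha1.le hx
  have hd0 := cotDiff_nonneg ha ha1 hx
  have hd2 : 0 < 1 - cotDiff a x ^ 2 := sub_pos.2 (pow_lt_one₀ hd0 hd two_ne_zero)
  exact mul_le_mul_of_nonneg_left (le_add_of_nonneg_right (by positivity)) (by positivity)

lemma one_le_criticalRatio (ha : 1 / 2 ≤ a) (ha1 : a < 1) (hx : x ∈ Ioo 0 π)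
    (hd : cotDiff a x < 1) : 1 ≤ criticalRatio a x := by
  have ha0 : 0 < a := by linarith
  have hlim : Tendsto (fun y => sineRatio a y ^ (a / (1 - a)) * cos (a * y)) (𝓝[>] 0) (𝓝 1) := by
    have hcos : Tendsto (fun y => cos (a * y)) (𝓝[>] 0) (𝓝 (cos (a * 0))) :=
      (Continuous.tendsto (by fun_prop) 0).mono_left nhdsWithin_le_nhds
    simpa using ((tendsto_sineRatio ha0.ne').rpow_const (Or.inl one_ne_zero)).mul hcos
  refine le_of_tendsto hlim ?_
  filter_upwards [Ioc_mem_nhdsGT hx.1] with y hy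
  have hyπ : y ∈ Ioo 0 π := ⟨hy.1, hy.2.trans_lt hx.2⟩
  have hdy : cotDiff a y < 1 := (monotoneOn_cotDiff ha ha1 hyπ hx hy.2).trans_lt hd
  exact (rpow_mul_cos_le_criticalRatio ha0 ha1 hyπ hdy).trans
    (monotoneOn_criticalRatio ha ha1 hx hd hy (right_mem_Ioc.2 hx.1) hy.2)

lemma criticalRatio_nonpos (ha : 1 / 2 ≤ a) (ha1 : a < 1) (hx : x ∈ Ioo 0 π)
    (hd : 1 < cotDiff a x) : criticalRatio a x ≤ 0 := by
  have ha0 : 0 < a := by linarith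
  have hsin := sin_mul_pos ha0 ha1.le hx
  have hcot := cotDiff_mul_cot_le_one ha ha1 hx
  have hd2 : 1 - cotDiff a x ^ 2 < 0 := by nlinarith
  have hfactor : cos (a * x) + sin (a * x) * (2 * cotDiff a x / (1 - cotDiff a x ^ 2)) =
      sin (a * x) *
        ((2 * cotDiff a x - (cotDiff a x ^ 2 - 1) * cot (a * x)) / (1 - cotDiff a x ^ 2)) := by
    rw [cot_eq_cos_div_sin]
    field_simp [hd2.ne]
    ring
  have hnum : 0 ≤ 2 * cotDiff a x - (cotDiff a x ^ 2 - 1) * cot (a * x) := by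
    have hmul := mul_le_mul_of_nonpos_left hcot hd2.le
    refine le_of_mul_le_mul_left (a := cotDiff a x) ?_ (one_pos.trans hd)
    linarith [sq_nonneg (cotDiff a x)]
  rw [criticalRatio, hfactor]
  exact mul_nonpos_of_nonneg_of_nonpos (rpow_nonneg (sineRatio_pos ha0 ha1.le hx).le _)
    (mul_nonpos_of_nonneg_of_nonpos hsin.le (div_nonpos_of_nonneg_of_nonpos hnum hd2.le))

lemma criticalRatio_notMem_Ioo (ha : 1 / 2 ≤ a) (ha1 : a < 1) (hx : x ∈ Ioo 0 π)
    (hd : cotDiff a x ≠ 1) : criticalRatio a x ∉ Ioo 0 1 := by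
  rcases hd.lt_or_gt with hd | hd
  · exact fun h => h.2.not_ge (one_le_criticalRatio ha ha1 hx hd)
  · exact fun h => h.1.not_ge (criticalRatio_nonpos ha ha1 hx hd)

end Monotonicity

section ChangeOfVariables

variable {α φ : ℝ}

lemma pi_sub_div_one_add_one_div (hα : 0 < α) :
    (π - φ) / (1 + 1 / α) = α / (1 + α) * (π - φ) := by
  field_simp
  ring

lemma Th_one_div (hα : 0 < α) : Th (1 / α) φ = sineRatio (α / (1 + α)) (π - φ) := by
  rw [Th, sineRatio, pi_sub_div_one_add_one_div hα, sin_pi_sub]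
  field_simp
  ring

lemma dfun_eq_cotDiff (hα : 0 < α) : dfun α φ = cotDiff (α / (1 + α)) (π - φ) := by
  have hcot : cot (π - φ) = -cot φ := by
    rw [cot_eq_cos_div_sin, cot_eq_cos_div_sin, cos_pi_sub, sin_pi_sub, neg_div]
  have h1a : 1 - α / (1 + α) = 1 / (1 + α) := by
    field_simp
    ring
  rw [dfun, cotDiff, pi_sub_div_one_add_one_div hα, hcot, h1a]
  field_simp
  ring

lemma sin_pi_sub_div_pos (hα : 0 < α) (hφ : φ ∈ Ioo 0 π) : 0 < sin ((π - φ) / (1 + α)) := by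
  refine sin_pos_of_pos_of_lt_pi (div_pos (sub_pos.2 hφ.2) (by positivity)) ?_
  rw [div_lt_iff₀ (by positivity)]
  nlinarith [hφ.1, pi_pos]

lemma Th_pos (hα : 0 < α) (hφ : φ ∈ Ioo 0 π) : 0 < Th α φ :=
  div_pos (sin_pos_of_mem_Ioo hφ) (mul_pos (by positivity) (sin_pi_sub_div_pos hα hφ))

lemma ufun_eq_zero_iff (hα : 0 < α) (hφ : φ ∈ Ioo 0 π) : ufun α φ = 0 ↔ dfun α φ ^ 2 = 1 := by
  have hsin := sin_pi_sub_div_pos hα hφ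
  have hT := Th_pos (one_div_pos.2 hα) hφ
  have hfactor : 2 * sin ((π - φ) / (1 + α)) / (1 + α) * Th (1 / α) φ ^ (2 * α + 1) ≠ 0 := by
    positivity
  rw [ufun, mul_eq_zero_iff_left hfactor, sub_eq_zero]

lemma wfun_ne_zero (hα : 0 < α) (hφ : φ ∈ Ioo 0 π) (hd : dfun α φ = 1) : wfun α φ ≠ 0 := by
  have hsinφ := sin_pos_of_mem_Ioo hφ
  have hsin : 0 < sin ((π - φ) / (1 + 1 / α)) := sin_pi_sub_div_pos (one_div_pos.2 hα) hφ
  have hT := Th_pos (one_div_pos.2 hα) hφ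
  rw [wfun, hd, one_pow, sub_self, zero_mul, zero_sub, mul_one]
  exact mul_ne_zero (by positivity) (neg_ne_zero.2 (by positivity))

lemma ufun_mul_sfun (hα : 0 < α) (hφ : φ ∈ Ioo 0 π) :
    ufun α φ * sfun α φ =
      2 * sin φ / (1 + α) ^ 2 * Th (1 / α) φ ^ (3 * α + 1) * (dfun α φ ^ 2 - 1) := by
  have hsin := (sin_pi_sub_div_pos hα hφ).ne'
  have hpow : Th (1 / α) φ ^ (3 * α + 1) = Th (1 / α) φ ^ (2 * α + 1) * Th (1 / α) φ ^ α := by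
    rw [← rpow_add (Th_pos (one_div_pos.2 hα) hφ)]
    ring_nf
  have hTα : Th α φ = sin φ / ((1 + α) * sin ((π - φ) / (1 + α))) := rfl
  rw [ufun, sfun, hpow, hTα]
  field_simp

lemma wfun_div_ufun_mul_sfun (hα : 0 < α) (hφ : φ ∈ Ioo 0 π) (hd : dfun α φ ^ 2 ≠ 1) :
    wfun α φ / (ufun α φ * sfun α φ) = criticalRatio (α / (1 + α)) (π - φ) := by
  have hsin := (sin_pos_of_mem_Ioo hφ).ne'
  have hT := Th_pos (one_div_pos.2 hα) hφ
  have hd' : 1 - dfun α φ ^ 2 ≠ 0 := sub_ne_zero.2 hd.symm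
  have hpow : Th (1 / α) φ ^ (4 * α + 1) = Th (1 / α) φ ^ (3 * α + 1) * Th (1 / α) φ ^ α := by
    rw [← rpow_add hT]
    ring_nf
  have hexp : α / (1 + α) / (1 - α / (1 + α)) = α := by
    field_simp
    ring
  rw [ufun_mul_sfun hα hφ, wfun, hpow, criticalRatio, hexp, ← Th_one_div hα,
    ← dfun_eq_cotDiff hα, ← pi_sub_div_one_add_one_div hα]
  field_simp
  ring

end ChangeOfVariables

theorem stmt18 (α : ℝ) (hα : 1 ≤ α) :
    ∀ φ ∈ Set.Ioo 0 Real.pi,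
      (ufun α φ = 0 ∧ wfun α φ ≠ 0) ∨
      (ufun α φ ≠ 0 ∧ wfun α φ / (ufun α φ * sfun α φ) ∉ Set.Ioo (0:ℝ) 1) := by
  intro φ hφ
  have hα0 : 0 < α := one_pos.trans_le hα
  have ha : 1 / 2 ≤ α / (1 + α) := by
    rw [div_le_div_iff₀ two_pos (by positivity)]
    linarith
  have ha1 : α / (1 + α) < 1 := (div_lt_one (by positivity)).2 (lt_one_add α)
  have hx : π - φ ∈ Ioo 0 π := ⟨sub_pos.2 hφ.2, sub_lt_self π hφ.1⟩
  have hd0 : 0 ≤ dfun α φ := by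
    rw [dfun_eq_cotDiff hα0]
    exact cotDiff_nonneg (by positivity) ha1 hx
  have hsq : dfun α φ ^ 2 = 1 ↔ dfun α φ = 1 := pow_eq_one_iff_of_nonneg hd0 two_ne_zero
  by_cases hd : dfun α φ = 1
  · exact Or.inl ⟨(ufun_eq_zero_iff hα0 hφ).2 (hsq.2 hd), wfun_ne_zero hα0 hφ hd⟩
  · refine Or.inr ⟨fun hu => hd (hsq.1 ((ufun_eq_zero_iff hα0 hφ).1 hu)), ?_⟩
    rw [wfun_div_ufun_mul_sfun hα0 hφ (mt hsq.1 hd)]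
    exact criticalRatio_notMem_Ioo ha ha1 hx (dfun_eq_cotDiff (φ := φ) hα0 ▸ hd)
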